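/- Let (p, F) be a generating pair and θ an infinite string over [N]. Then distinct tiles of T(θ) have disjoint interiors: if t, t' ∈ T(θ) and t ≠ t', then the interiors of t and t' are disjoint. -/

import Mathlib

/-!
The patches `T(θ, k)` increase with `k`, because `t(θ, k, σ) = t(θ, k + 1, θ_{k+1}σ)` and prepending
`θ_{k+1}` carries `S_{e(θ|k)}` into `S_{e(θ|k+1)}` (`patch_subset_succ`). Two tiles of `T(θ)` thus lie
in a common patch, and are the images under the single homeomorphism `f_{-(θ|k)}` of `f_σ(p)` and
`f_τ(p)` with `σ ≠ τ` in the same `S_n`. Such strings are prefix-incomparable (`Sset_eq_of_prefix`), so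
past their longest common prefix they continue with different letters `i ≠ j`; the two pieces
therefore lie in homeomorphic images of `f_i(p)` and `f_j(p)`, whose interiors are disjoint
(`interior_fstr_inter_eq_empty`).
-/

open Set

noncomputable section

abbrev Pt := EuclideanSpace ℝ (Fin 2)

/-- A similitude of the plane with scaling ratio `r`. -/
def IsSimilitude (f : Pt → Pt) (r : ℝ) : Prop :=
  Function.Bijective f ∧ ∀ x y, dist (f x) (f y) = r * dist x y

/-- `e(σ) = a_{σ₁} + ⋯ + a_{σ_k}` for a finite string `σ` over `[N]`. -/
def estr {N : ℕ} (a : Fin N → ℕ) (σ : List (Fin N)) : ℕ := (σ.map a).sum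

/-- `e⁻(σ) = e(σ) - a_{σ_k}` (the sum over all but the last letter). -/
def eminus {N : ℕ} (a : Fin N → ℕ) (σ : List (Fin N)) : ℕ := estr a σ.dropLast

/-- `f_σ = f_{σ₁} ∘ f_{σ₂} ∘ ⋯ ∘ f_{σ_k}`. -/
def fstr {N : ℕ} (f : Fin N → Pt → Pt) (σ : List (Fin N)) : Pt → Pt :=
  σ.foldr (fun i g => f i ∘ g) id

/-- `f_{-σ} = f_{σ₁}⁻¹ ∘ f_{σ₂}⁻¹ ∘ ⋯ ∘ f_{σ_k}⁻¹`. -/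
def fneg {N : ℕ} (f : Fin N → Pt → Pt) (σ : List (Fin N)) : Pt → Pt :=
  σ.foldr (fun i g => Function.invFun (f i) ∘ g) id

/-- `S_n` = nonempty finite strings `σ` with `e(σ) ≥ n > e⁻(σ)`. -/
def Sset {N : ℕ} (a : Fin N → ℕ) (n : ℕ) : Set (List (Fin N)) :=
  {σ | σ ≠ [] ∧ n ≤ estr a σ ∧ eminus a σ < n}

/-- `θ|k = θ₁θ₂⋯θ_k` (we index infinite strings from 0, so `θ|k = θ 0, …, θ (k-1)`). -/
def trunc {N : ℕ} (θ : ℕ → Fin N) (k : ℕ) : List (Fin N) :=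
  (List.range k).map θ

/-- The tile `t(θ,k,σ) = (f_{-(θ|k)} ∘ f_σ)(p)`. -/
def tile {N : ℕ} (f : Fin N → Pt → Pt) (p : Set Pt) (θ : ℕ → Fin N) (k : ℕ)
    (σ : List (Fin N)) : Set Pt :=
  (fneg f (trunc θ k) ∘ fstr f σ) '' p

/-- The patch `T(θ,k) = { t(θ,k,σ) : σ ∈ S_{e(θ|k)} }`. -/
def patch {N : ℕ} (a : Fin N → ℕ) (f : Fin N → Pt → Pt) (p : Set Pt) (θ : ℕ → Fin N)
    (k : ℕ) : Set (Set Pt) :=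
  tile f p θ k '' Sset a (estr a (trunc θ k))

/-- The tiling `T(θ) = ⋃_{k ≥ 1} T(θ,k)`. -/
def tiling {N : ℕ} (a : Fin N → ℕ) (f : Fin N → Pt → Pt) (p : Set Pt)
    (θ : ℕ → Fin N) : Set (Set Pt) :=
  ⋃ k ∈ {k : ℕ | 1 ≤ k}, patch a f p θ k

/-- Concatenation of a finite string `α` with an infinite string `θ`. -/
def cat {N : ℕ} (α : List (Fin N)) (θ : ℕ → Fin N) : ℕ → Fin N :=
  fun i => if h : i < α.length then α.get ⟨i, h⟩ else θ (i - α.length)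

/-- A generating pair `(p, F)` with data `a₁,…,a_N` and scaling number `s`. -/
structure GenPair (N : ℕ) (a : Fin N → ℕ) (s : ℝ) (p : Set Pt)
    (f : Fin N → Pt → Pt) : Prop where
  two_le : 2 ≤ N
  a_pos : ∀ n, 0 < a n
  a_gcd : Finset.univ.gcd a = 1
  s_pos : 0 < s
  s_lt_one : s < 1
  s_eq : ∑ n, s ^ (2 * a n) = 1
  p_nonempty : p.Nonempty
  p_compact : IsCompact p
  p_closure : p = closure (interior p)
  sim : ∀ n, IsSimilitude (f n) (s ^ a n)
  cover : p = ⋃ n, f n '' p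
  disj : ∀ m n, m ≠ n → interior (f m '' p) ∩ interior (f n '' p) = ∅

theorem similitude_isHomeomorph {f : Pt → Pt} {r : ℝ} (hr : 0 < r) (hf : IsSimilitude f r) :
    IsHomeomorph f := by
  obtain ⟨hbij, hd⟩ := hf
  have h1 : LipschitzWith ⟨r, hr.le⟩ f := LipschitzWith.of_dist_le_mul fun x y => (hd x y).le
  have h2 : AntilipschitzWith (⟨r, hr.le⟩⁻¹) f := by
    refine AntilipschitzWith.of_le_mul_dist fun x y => ?_
    change dist x y ≤ r⁻¹ * dist (f x) (f y)
    rw [hd, inv_mul_cancel_left₀ hr.ne']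
  exact isHomeomorph_iff_isEmbedding_surjective.2
    ⟨(h2.isUniformEmbedding h1.uniformContinuous).isEmbedding, hbij.2⟩

theorem isHomeomorph_invFun {f : Pt → Pt} (hf : IsHomeomorph f) :
    IsHomeomorph (Function.invFun f) := by
  have h : Function.invFun f = (hf.homeomorph f).symm := by
    funext x
    apply hf.injective
    rw [Function.invFun_eq (hf.surjective x)]
    exact ((hf.homeomorph f).apply_symm_apply x).symm
  rw [h]
  exact (hf.homeomorph f).symm.isHomeomorph

theorem interior_image {g : Pt → Pt} (hg : IsHomeomorph g) (A : Set Pt) :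
    interior (g '' A) = g '' interior A :=
  ((hg.homeomorph g).image_interior A).symm

theorem interior_image_inter_eq_empty {g : Pt → Pt} (hg : IsHomeomorph g) {A B : Set Pt}
    (h : interior A ∩ interior B = ∅) : interior (g '' A) ∩ interior (g '' B) = ∅ := by
  rw [interior_image hg, interior_image hg, ← image_inter hg.injective, h, image_empty]

theorem fneg_isHomeomorph {N : ℕ} {f : Fin N → Pt → Pt} (hf : ∀ n, IsHomeomorph (f n))
    (σ : List (Fin N)) : IsHomeomorph (fneg f σ) := by
  induction σ with
  | nil => exact IsHomeomorph.id
  | cons i σ ih => exact (isHomeomorph_invFun (hf i)).comp ih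

theorem fstr_image_cons {N : ℕ} (f : Fin N → Pt → Pt) (p : Set Pt) (i : Fin N)
    (σ : List (Fin N)) : fstr f (i :: σ) '' p = f i '' (fstr f σ '' p) :=
  image_comp (f i) (fstr f σ) p

theorem fstr_image_subset {N : ℕ} {f : Fin N → Pt → Pt} {p : Set Pt}
    (hp : p = ⋃ n, f n '' p) (σ : List (Fin N)) : fstr f σ '' p ⊆ p := by
  induction σ with
  | nil => exact (image_id p).subset
  | cons i σ ih =>
    rw [fstr_image_cons]
    refine (image_mono ih).trans ?_
    conv_rhs => rw [hp]
    exact subset_iUnion (fun n => f n '' p) i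

/-- Pieces of `p` addressed by prefix-incomparable strings have disjoint interiors: they lie in
distinct first-level pieces after the common prefix is removed. -/
theorem interior_fstr_inter_eq_empty {N : ℕ} {f : Fin N → Pt → Pt} {p : Set Pt}
    (hf : ∀ n, IsHomeomorph (f n)) (hp : p = ⋃ n, f n '' p)
    (hd : ∀ m n, m ≠ n → interior (f m '' p) ∩ interior (f n '' p) = ∅)
    (σ τ : List (Fin N)) (h1 : ¬ σ <+: τ) (h2 : ¬ τ <+: σ) :
    interior (fstr f σ '' p) ∩ interior (fstr f τ '' p) = ∅ := by
  induction σ generalizing τ with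
  | nil => exact absurd List.nil_prefix h1
  | cons i σ ih =>
    cases τ with
    | nil => exact absurd List.nil_prefix h2
    | cons j τ =>
      rw [fstr_image_cons, fstr_image_cons]
      by_cases hij : i = j
      · subst hij
        rw [List.cons_prefix_cons] at h1 h2
        exact interior_image_inter_eq_empty (hf i)
          (ih τ (fun h => h1 ⟨rfl, h⟩) (fun h => h2 ⟨rfl, h⟩))
      · exact subset_empty_iff.1 ((inter_subset_inter
          (interior_mono (image_mono (fstr_image_subset hp σ)))
          (interior_mono (image_mono (fstr_image_subset hp τ)))).trans (hd i j hij).subset)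

/-- `S_n` is an antichain for the prefix order: a proper prefix of `τ` is a prefix of `τ` with its
last letter removed, so its exponent is at most `e⁻(τ) < n`. -/
theorem Sset_eq_of_prefix {N : ℕ} {a : Fin N → ℕ} {n : ℕ} {σ τ : List (Fin N)}
    (hσ : σ ∈ Sset a n) (hτ : τ ∈ Sset a n) (h : σ <+: τ) : σ = τ := by
  obtain ⟨ρ, rfl⟩ := h
  rcases eq_or_ne ρ [] with rfl | hρ
  · simp
  · exfalso
    have h1 := hσ.2.1
    have h2 := hτ.2.2
    simp only [eminus, estr, List.dropLast_append_of_ne_nil hρ, List.map_append,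
      List.sum_append] at h1 h2
    omega

theorem trunc_succ {N : ℕ} (θ : ℕ → Fin N) (k : ℕ) : trunc θ (k + 1) = trunc θ k ++ [θ k] := by
  simp [trunc, List.range_succ]

theorem fneg_append_singleton {N : ℕ} (f : Fin N → Pt → Pt) (σ : List (Fin N)) (i : Fin N) :
    fneg f (σ ++ [i]) = fneg f σ ∘ Function.invFun (f i) := by
  induction σ with
  | nil => rfl
  | cons j σ ih => exact congrArg (Function.invFun (f j) ∘ ·) ih

/-- The tile `t(θ, k, σ)` is also the tile `t(θ, k + 1, θ_{k+1}σ)`, so the patches are nested. -/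
theorem patch_subset_succ {N : ℕ} (a : Fin N → ℕ) {f : Fin N → Pt → Pt} (p : Set Pt)
    (hf : ∀ n, IsHomeomorph (f n)) (θ : ℕ → Fin N) (k : ℕ) :
    patch a f p θ k ⊆ patch a f p θ (k + 1) := by
  rintro _ ⟨σ, ⟨hne, h1, h2⟩, rfl⟩
  refine ⟨θ k :: σ, ⟨List.cons_ne_nil _ _, ?_, ?_⟩, ?_⟩
  · simp only [trunc_succ, estr, List.map_append, List.sum_append, List.map_cons, List.sum_cons,
      List.map_nil, List.sum_nil] at *
    omega
  · simp only [trunc_succ, eminus, estr, List.dropLast_cons_of_ne_nil hne, List.map_append,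
      List.sum_append, List.map_cons, List.sum_cons, List.map_nil, List.sum_nil] at *
    omega
  · have h : fneg f (trunc θ (k + 1)) ∘ fstr f (θ k :: σ) = fneg f (trunc θ k) ∘ fstr f σ := by
      funext x
      rw [trunc_succ, fneg_append_singleton]
      exact congrArg (fneg f (trunc θ k)) (Function.leftInverse_invFun (hf (θ k)).injective _)
    rw [tile, tile, h]

/-- distinct tiles of `T(θ)` have disjoint interiors. -/
theorem stmt_15 (N : ℕ) (a : Fin N → ℕ) (s : ℝ) (p : Set Pt) (f : Fin N → Pt → Pt)
    (hGP : GenPair N a s p f) (θ : ℕ → Fin N) :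
    ∀ t ∈ tiling a f p θ, ∀ t' ∈ tiling a f p θ, t ≠ t' →
      interior t ∩ interior t' = ∅ := by
  have hf : ∀ n, IsHomeomorph (f n) := fun n =>
    similitude_isHomeomorph (pow_pos hGP.s_pos _) (hGP.sim n)
  have hmono : Monotone (patch a f p θ) := monotone_nat_of_le_succ (patch_subset_succ a p hf θ)
  intro t ht t' ht' hne
  simp only [tiling, mem_iUnion] at ht ht'
  obtain ⟨k, -, hk⟩ := ht
  obtain ⟨l, -, hl⟩ := ht'
  obtain ⟨σ, hσ, rfl⟩ := hmono (le_max_left k l) hk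
  obtain ⟨τ, hτ, rfl⟩ := hmono (le_max_right k l) hl
  have hστ : σ ≠ τ := fun h => hne (by rw [h])
  rw [tile, tile, image_comp, image_comp]
  exact interior_image_inter_eq_empty (fneg_isHomeomorph hf _)
    (interior_fstr_inter_eq_empty hf hGP.cover hGP.disj σ τ
      (fun h => hστ (Sset_eq_of_prefix hσ hτ h))
      (fun h => hστ (Sset_eq_of_prefix hτ hσ h).symm))
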